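/- arXiv:2502.05939 — 5 statements merged into one kernel-verified Lean document; each statement's English description precedes it below -/
import Mathlib

section
/- The map sending a permutation π of [n] to the sequence λ(π) defined by λ(π)_i = max{π_1, …, π_i} is a bijection from the set of 312-avoiding permutations in S_n onto the set of weakly increasing sequences λ = (λ_1 ≤ λ_2 ≤ … ≤ λ_n) of positive integers satisfying λ_i ≥ i for all i ∈ [n] and λ_n = n. -/
/-!
A permutation avoids 312 exactly when each `σ i` is the largest value that does not exceed the
running maximum at `i` and has not been used before position `i`: a larger such value would occur
at a later position and complete a 312 between the running maximum and `σ i`. This greedy rule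
recovers `σ` from its running maximum. Conversely, when `L i ≥ i` the rule never gets stuck, since
only `i - 1` of the `L i` admissible values are already used, and the greedy permutation has running
maximum `L` because the top admissible value has been used by the time position `i` is filled.
-/

/-- A permutation `σ` avoids the pattern `312` if there are no indices `i < j < k`
with `σ j < σ k < σ i`. -/
def Avoids312 {n : ℕ} (σ : Equiv.Perm (Fin n)) : Prop :=
  ¬ ∃ i j k : Fin n, i < j ∧ j < k ∧ σ j < σ k ∧ σ k < σ i

/-- `runningMax σ i = max {σ_1, …, σ_i}`, where the values of `σ` are taken as
1-based positive integers (so the value at position `j : Fin n` is `(σ j : ℕ) + 1`). -/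
def runningMax {n : ℕ} (σ : Equiv.Perm (Fin n)) (i : Fin n) : ℕ :=
  (Finset.Iic i).sup fun j => (σ j : ℕ) + 1

section GreedyChoice

open Set

variable {ι α : Type*}

/-- `f` is the greedy choice from the family `S`: each `f i` is the largest element of `S i` that
has not been chosen at an earlier index. -/
def IsGreedyChoice [Preorder ι] [LE α] (S : ι → Set α) (f : ι → α) : Prop :=
  ∀ i, IsGreatest (S i \ f '' Iio i) (f i)

theorem IsGreedyChoice.injective [LinearOrder ι] [LE α] {S : ι → Set α} {f : ι → α}
    (hf : IsGreedyChoice S f) : Function.Injective f :=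
  Function.Injective.of_lt_imp_ne fun i j hij hfij => (hf j).1.2 ⟨i, hij, hfij⟩

theorem IsGreedyChoice.unique [Preorder ι] [WellFoundedLT ι] [PartialOrder α] {S : ι → Set α}
    {f g : ι → α} (hf : IsGreedyChoice S f) (hg : IsGreedyChoice S g) : f = g := by
  funext i
  induction i using WellFoundedLT.induction with
  | ind i ih =>
    have himage : f '' Iio i = g '' Iio i := image_congr ih
    exact (hf i).unique (himage ▸ hg i)

theorem exists_isGreedyChoice [Preorder ι] [WellFoundedLT ι] [LinearOrder α] {S : ι → Set α}
    (hfin : ∀ i, (S i).Finite) (hcard : ∀ i, (Iio i).encard < (S i).encard) :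
    ∃ f, IsGreedyChoice S f := by
  have hgreatest (i : ι) (g : Iio i → α) : ∃ a, IsGreatest (S i \ range g) a := by
    have hlt : (range g).encard < (S i).encard := by
      rw [← image_univ]
      exact (encard_image_le g univ).trans_lt (by simpa using hcard i)
    have hne : (S i \ range g).Nonempty :=
      sdiff_nonempty.2 fun hsub => (encard_le_encard hsub).not_gt hlt
    obtain ⟨a, ha, hmax⟩ := exists_max_image _ id ((hfin i).subset sdiff_subset) hne
    exact ⟨a, ha, hmax⟩
  choose pick hpick using hgreatest
  let f : ι → α := wellFounded_lt.fix fun i g => pick i fun j => g j j.2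
  refine ⟨f, fun i => ?_⟩
  have hfi : f i = pick i fun j => f j := wellFounded_lt.fix_eq _ i
  rw [image_eq_range, hfi]
  exact hpick i _

theorem IsGreedyChoice.lowerClosure_image_Iic [Preorder ι] [Preorder α] {S : ι → LowerSet α}
    {f : ι → α} (hf : IsGreedyChoice (fun i => (S i : Set α)) f) (hS : Monotone S) {i : ι} {m : α}
    (hm : IsGreatest (S i : Set α) m) : (lowerClosure (f '' Iic i) : Set α) = S i := by
  apply Subset.antisymm
  · refine lowerClosure_min ?_ (S i).lower
    rintro _ ⟨j, hji, rfl⟩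
    exact hS hji (hf j).1.1
  · have hchosen : ∃ j ≤ i, m ≤ f j := by
      by_cases hused : m ∈ f '' Iio i
      · obtain ⟨j, hji, rfl⟩ := hused
        exact ⟨j, hji.le, le_rfl⟩
      · exact ⟨i, le_rfl, (hf i).2 ⟨hm.1, hused⟩⟩
    obtain ⟨j, hji, hmj⟩ := hchosen
    exact fun v hv => mem_lowerClosure.2 ⟨f j, mem_image_of_mem f hji, (hm.2 hv).trans hmj⟩

theorem isGreedyChoice_lowerClosure_iff [LinearOrder ι] [LinearOrder α] {f : ι → α}
    (hinj : f.Injective) (hrange : IsLowerSet (range f)) :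
    IsGreedyChoice (fun i => (lowerClosure (f '' Iic i) : Set α)) f ↔
      ¬ ∃ i j k, i < j ∧ j < k ∧ f j < f k ∧ f k < f i := by
  constructor
  · rintro hf ⟨i, j, k, hij, hjk, hfjk, hfki⟩
    have hmem : f k ∈ lowerClosure (f '' Iic j) :=
      mem_lowerClosure.2 ⟨f i, mem_image_of_mem f hij.le, hfki.le⟩
    have hnew : f k ∉ f '' Iio j := by
      rw [hinj.mem_set_image]
      exact hjk.not_gt
    exact ((hf j).2 ⟨hmem, hnew⟩).not_gt hfjk
  · refine fun havoid i => ⟨⟨subset_lowerClosure (mem_image_of_mem f self_mem_Iic), ?_⟩, ?_⟩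
    · rw [hinj.mem_set_image]
      exact lt_irrefl i
    · rintro v ⟨hv, hnew⟩
      obtain ⟨_, ⟨m, hmi, rfl⟩, hvm⟩ := mem_lowerClosure.1 hv
      obtain ⟨k, rfl⟩ := hrange hvm (mem_range_self m)
      rw [hinj.mem_set_image, mem_Iio, not_lt] at hnew
      by_contra! hlt
      have hik : i < k := hnew.lt_of_ne fun h => hlt.ne (congrArg f h)
      have hkm : f k < f m := hvm.lt_of_ne (hinj.ne (hmi.trans_lt hik).ne')
      have hmi' : m < i := lt_of_le_of_ne hmi fun h => (hlt.trans hkm).ne' (congrArg f h)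
      exact havoid ⟨m, i, k, hmi', hik, hlt, hkm⟩

end GreedyChoice

section RunningMax

variable {n : ℕ}

theorem lt_runningMax_iff {σ : Equiv.Perm (Fin n)} {i : Fin n} {v : ℕ} :
    v < runningMax σ i ↔ ∃ j ≤ i, v ≤ σ j := by
  simp [runningMax, Finset.lt_sup_iff]

theorem runningMax_mono (σ : Equiv.Perm (Fin n)) : Monotone (runningMax σ) :=
  fun _ _ hij => Finset.sup_mono (Finset.Iic_subset_Iic.2 hij)

theorem runningMax_le (σ : Equiv.Perm (Fin n)) (i : Fin n) : runningMax σ i ≤ n :=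
  Finset.sup_le fun j _ => (σ j).isLt

theorem succ_le_runningMax (σ : Equiv.Perm (Fin n)) (i : Fin n) : (i : ℕ) + 1 ≤ runningMax σ i :=
  calc (i : ℕ) + 1 = (Finset.Iic i).card := (Fin.card_Iic i).symm
    _ ≤ (Finset.range (runningMax σ i)).card :=
      Finset.card_le_card_of_injOn (fun j => (σ j : ℕ))
        (fun j hj => by simpa using lt_runningMax_iff.2 ⟨j, Finset.mem_Iic.1 hj, le_rfl⟩)
        (Fin.val_injective.comp σ.injective).injOn
    _ = runningMax σ i := Finset.card_range _

theorem runningMax_last (σ : Equiv.Perm (Fin n)) (h : 0 < n) :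
    runningMax σ ⟨n - 1, Nat.sub_lt h one_pos⟩ = n := by
  refine (runningMax_le σ _).antisymm ?_
  calc n = n - 1 + 1 := (Nat.sub_one_add_one h.ne').symm
    _ ≤ runningMax σ _ := succ_le_runningMax σ ⟨n - 1, Nat.sub_lt h one_pos⟩

theorem lowerClosure_image_Iic_eq_Iio_runningMax (σ : Equiv.Perm (Fin n)) (i : Fin n) :
    (lowerClosure ((fun j => (σ j : ℕ)) '' Set.Iic i) : Set ℕ) = Set.Iio (runningMax σ i) := by
  ext v
  simp [mem_lowerClosure, lt_runningMax_iff]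

theorem avoids312_iff_isGreedyChoice {σ : Equiv.Perm (Fin n)} :
    Avoids312 σ ↔
      IsGreedyChoice (fun i => Set.Iio (runningMax σ i)) (fun i => (σ i : ℕ)) := by
  have hrange : Set.range (fun i => (σ i : ℕ)) = Set.Iio n :=
    (σ.surjective.range_comp Fin.val).trans Fin.range_val
  have hiff := isGreedyChoice_lowerClosure_iff (Fin.val_injective.comp σ.injective)
    (hrange ▸ isLowerSet_Iio n)
  simp only [← lowerClosure_image_Iic_eq_Iio_runningMax]
  exact hiff.symm

theorem runningMax_eq_of_isGreedyChoice {σ : Equiv.Perm (Fin n)} {L : Fin n → ℕ}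
    (hσ : IsGreedyChoice (fun i => Set.Iio (L i)) (fun i => (σ i : ℕ))) (hmono : Monotone L)
    (hpos : ∀ i, 0 < L i) : runningMax σ = L := by
  funext i
  have hmax : IsGreatest (Set.Iio (L i)) (L i - 1) :=
    ⟨Nat.sub_one_lt (hpos i).ne', fun _ => Nat.le_sub_one_of_lt⟩
  have hclosure := IsGreedyChoice.lowerClosure_image_Iic (S := fun i => LowerSet.Iio (L i)) hσ
    (fun _ _ hij => Set.Iio_subset_Iio (hmono hij)) hmax
  rw [lowerClosure_image_Iic_eq_Iio_runningMax] at hclosure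
  exact Set.Iio_injective hclosure

theorem exists_perm_isGreedyChoice {L : Fin n → ℕ} (hle : ∀ i, L i ≤ n)
    (hge : ∀ i : Fin n, (i : ℕ) + 1 ≤ L i) :
    ∃ σ : Equiv.Perm (Fin n),
      IsGreedyChoice (fun i => Set.Iio (L i)) (fun i => (σ i : ℕ)) := by
  obtain ⟨f, hf⟩ := exists_isGreedyChoice (fun i => Set.finite_Iio (L i)) fun i => by
    simp only [← Finset.coe_Iio, Set.encard_coe_eq_coe_finsetCard, Fin.card_Iio, Nat.card_Iio]
    exact_mod_cast hge i
  let g (i : Fin n) : Fin n := ⟨f i, (hf i).1.1.trans_le (hle i)⟩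
  have hg : Function.Injective g := fun i j hij => hf.injective (congrArg Fin.val hij)
  exact ⟨Equiv.ofBijective g (Finite.injective_iff_bijective.1 hg), hf⟩

end RunningMax

/-- The map `π ↦ λ(π)` with `λ(π)_i = max {π_1, …, π_i}` is a bijection from the
312-avoiding permutations in `S_n` onto the weakly increasing sequences
`λ_1 ≤ λ_2 ≤ … ≤ λ_n` of positive integers with `λ_i ≥ i` for all `i` and `λ_n = n`. -/
theorem runningMax_bijOn (n : ℕ) :
    Set.BijOn (fun σ : Equiv.Perm (Fin n) => runningMax σ)
      {σ : Equiv.Perm (Fin n) | Avoids312 σ}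
      {L : Fin n → ℕ | Monotone L ∧ (∀ i : Fin n, (i : ℕ) + 1 ≤ L i) ∧
        ∀ h : 0 < n, L ⟨n - 1, Nat.sub_lt h one_pos⟩ = n} := by
  refine ⟨fun σ _ => ⟨runningMax_mono σ, succ_le_runningMax σ, runningMax_last σ⟩, ?_, ?_⟩
  · intro σ hσ τ hτ (hmax : runningMax σ = runningMax τ)
    have hgσ := avoids312_iff_isGreedyChoice.1 hσ
    have hgτ := avoids312_iff_isGreedyChoice.1 hτ
    rw [← hmax] at hgτ
    exact Equiv.ext fun i => Fin.ext (congrFun (hgσ.unique hgτ) i)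
  · rintro L ⟨hmono, hge, hlast⟩
    have hle (i : Fin n) : L i ≤ n :=
      (hmono (Fin.le_def.2 (Nat.le_sub_one_of_lt i.isLt))).trans_eq (hlast i.pos)
    obtain ⟨σ, hσ⟩ := exists_perm_isGreedyChoice hle hge
    have hmax : runningMax σ = L :=
      runningMax_eq_of_isGreedyChoice hσ hmono fun i => Nat.zero_lt_of_lt (hge i)
    exact ⟨σ, avoids312_iff_isGreedyChoice.2 (hmax.symm ▸ hσ), hmax⟩
end

section
/- Let π ∈ S_n be a 312-avoiding permutation and set λ_i = max{π_1, …, π_i} for i ∈ [n]. Then for every σ ∈ S_n, σ ≤_B π in the Bruhat order if and only if σ_i ≤ λ_i for all i ∈ [n]; that is, the lower Bruhat interval [id, π]_B is exactly the set of complete rook placements on the Ferrers board λ. -/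
/-- The number of inversions of a permutation: pairs of positions `i < j`
with `σ i > σ j`. -/
def invCount {n : ℕ} (σ : Equiv.Perm (Fin n)) : ℕ :=
  (Finset.univ.filter fun p : Fin n × Fin n => p.1 < p.2 ∧ σ p.2 < σ p.1).card

/-- One step in the Bruhat order: `τ` is obtained from `σ` by swapping two (not
necessarily adjacent) entries in one-line notation, strictly increasing the number
of inversions. -/
def BruhatStep {n : ℕ} (σ τ : Equiv.Perm (Fin n)) : Prop :=
  (∃ i j : Fin n, i ≠ j ∧ τ = σ * Equiv.swap i j) ∧ invCount σ < invCount τ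

/-- The Bruhat order: `σ ≤_B π` iff there is a chain from `σ` to `π` of swaps, each
strictly increasing the number of inversions. -/
def BruhatLE {n : ℕ} (σ π : Equiv.Perm (Fin n)) : Prop :=
  Relation.ReflTransGen BruhatStep σ π

/-!
Bruhat-increasing transpositions only enlarge the Ferrers board `λ` of a permutation, so `σ ≤_B π`
makes `σ` a placement on the board of `π`. Conversely, climb from a placement `σ` by transpositions
that stay on the board for as long as possible. The climb stops at a saturated placement, and a
board carries at most one of these: at the first column where two of them differ, the one with the
lower rook could be raised. When `π` avoids `312` it is itself saturated on its own board, because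
an ascent `π i < π j ≤ λ i` forces an earlier value above `π j`, which completes a `312`.
-/

section Boards

variable {α β : Type*}

/-- `f` is a rook placement on the board whose column over `i` is the set of cells `B i`, with the
rook of column `i` standing in row `f i`. -/
def IsRookPlacement (B : α → Set β) (f : α → β) : Prop :=
  ∀ i, f i ∈ B i

/-- `f` is saturated on `B`: exchanging the two rooks of any ascent moves the higher one off the
board, so no placement above `f` in the Bruhat order is one transposition away. -/
def IsSaturatedOn [LT α] [LT β] (B : α → Set β) (f : α → β) : Prop :=
  ∀ ⦃i j⦄, i < j → f i < f j → f j ∉ B i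

/-- The Ferrers board whose column over `i` consists of the values at most `max {f m | m ≤ i}`. The
maximum is not mentioned, so no `1`-based shift of the values is needed. -/
def ferrersBoard [LE α] [LE β] (f : α → β) (i : α) : Set β :=
  {v | ∃ m ≤ i, v ≤ f m}

theorem isRookPlacement_ferrersBoard [Preorder α] [Preorder β] (f : α → β) :
    IsRookPlacement (ferrersBoard f) f :=
  fun i ↦ ⟨i, le_rfl, le_rfl⟩

theorem monotone_ferrersBoard [Preorder α] [LE β] (f : α → β) : Monotone (ferrersBoard f) :=
  fun _ _ hij _ ⟨m, hm, hv⟩ ↦ ⟨m, hm.trans hij, hv⟩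

theorem ferrersBoard_subset_comp_swap [Preorder α] [DecidableEq α] [Preorder β] {f : α → β}
    {i j : α} (hij : i ≤ j) (hf : f i ≤ f j) (k : α) :
    ferrersBoard f k ⊆ ferrersBoard (f ∘ Equiv.swap i j) k := by
  rintro v ⟨m, hmk, hv⟩
  rcases eq_or_ne m i with rfl | hmi
  · exact ⟨m, hmk, by simpa using hv.trans hf⟩
  rcases eq_or_ne m j with rfl | hmj
  · exact ⟨i, hij.trans hmk, by simpa using hv⟩
  · exact ⟨m, hmk, by simpa [Equiv.swap_apply_of_ne_of_ne hmi hmj] using hv⟩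

theorem IsRookPlacement.comp_swap [Preorder α] [DecidableEq α] {B : α → Set β} {f : α → β}
    (hB : Monotone B) (hf : IsRookPlacement B f) {i j : α} (hij : i ≤ j) (hj : f j ∈ B i) :
    IsRookPlacement B (f ∘ Equiv.swap i j) := by
  intro m
  rcases eq_or_ne m i with rfl | hmi
  · simpa using hj
  rcases eq_or_ne m j with rfl | hmj
  · simpa using hB hij (hf i)
  · simpa [Equiv.swap_apply_of_ne_of_ne hmi hmj] using hf m

theorem IsSaturatedOn.le_of_eqOn_Iio [LinearOrder α] [LinearOrder β] {B : α → Set β} {f g : α → β}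
    (hf : IsSaturatedOn B f) (hfsurj : f.Surjective) (hginj : g.Injective) {i : α}
    (hg : g i ∈ B i) (heq : Set.EqOn f g (Set.Iio i)) : g i ≤ f i := by
  by_contra! hlt
  obtain ⟨j, hj⟩ := hfsurj (g i)
  rcases lt_trichotomy j i with hji | rfl | hij
  · exact hji.ne (hginj ((heq hji).symm.trans hj))
  · exact hlt.ne hj
  · exact hf hij (hj ▸ hlt) (hj ▸ hg)

theorem IsSaturatedOn.eq_of_bijective [LinearOrder α] [WellFoundedLT α] [LinearOrder β]
    {B : α → Set β} {f g : α → β} (hf : IsSaturatedOn B f) (hg : IsSaturatedOn B g)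
    (hfB : IsRookPlacement B f) (hgB : IsRookPlacement B g)
    (hfbij : f.Bijective) (hgbij : g.Bijective) : f = g := by
  funext i
  induction i using WellFoundedLT.induction with
  | ind i ih =>
    exact le_antisymm
      (hg.le_of_eqOn_Iio hgbij.surjective hfbij.injective (hfB i) fun j hj ↦ (ih j hj).symm)
      (hf.le_of_eqOn_Iio hfbij.surjective hgbij.injective (hgB i) ih)

end Boards

section Inversions

variable {α β : Type*} [LinearOrder α]

/-- The action of `s` on pairs `a < b`, modified to fix the pairs whose order `s` reverses. For an
involution `s` it permutes the pairs `a < b`, so inversions can be compared along it. -/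
def orderedPairMap (s : Equiv.Perm α) (p : α × α) : α × α :=
  if s p.1 < s p.2 then (s p.1, s p.2) else p

theorem orderedPairMap_orderedPairMap {s : Equiv.Perm α} (hs : Function.Involutive s) {p : α × α}
    (hp : p.1 < p.2) : orderedPairMap s (orderedPairMap s p) = p := by
  by_cases hsp : s p.1 < s p.2
  · simp [orderedPairMap, hsp, hs _, hp]
  · simp [orderedPairMap, hsp]

variable [Preorder β] {f : α → β} {i j : α}

/-- The inversions of `f`, as pairs of positions; for a permutation of `Fin n` these are the pairs
counted by `invCount`. -/
def inversionSet (f : α → β) : Set (α × α) :=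
  {p | p.1 < p.2 ∧ f p.2 < f p.1}

theorem comp_swap_lt_comp_swap_of_not_lt (hij : i < j) (hf : f i ≤ f j) {a b : α} (hab : a < b)
    (hs : ¬ Equiv.swap i j a < Equiv.swap i j b) (hinv : f b < f a) :
    f (Equiv.swap i j b) < f (Equiv.swap i j a) := by
  have hends : a = i ∧ b ≤ j ∨ i ≤ a ∧ b = j := by grind
  have hb : f (Equiv.swap i j b) ≤ f b := by grind
  have ha : f a ≤ f (Equiv.swap i j a) := by grind
  exact hb.trans_lt (hinv.trans_le ha)

theorem mapsTo_orderedPairMap_inversionSet (hij : i < j) (hf : f i ≤ f j) :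
    Set.MapsTo (orderedPairMap (Equiv.swap i j)) (inversionSet f)
      (inversionSet (f ∘ Equiv.swap i j)) := by
  rintro ⟨a, b⟩ ⟨hab, hinv⟩
  by_cases hs : Equiv.swap i j a < Equiv.swap i j b
  · simpa [orderedPairMap, inversionSet, hs] using hinv
  · simpa [orderedPairMap, inversionSet, hs, hab] using
      comp_swap_lt_comp_swap_of_not_lt hij hf hab hs hinv

theorem injOn_orderedPairMap_inversionSet :
    Set.InjOn (orderedPairMap (Equiv.swap i j)) (inversionSet f) := by
  intro p hp q hq hpq
  have hinvol := Equiv.swap_apply_self i j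
  rw [← orderedPairMap_orderedPairMap hinvol hp.1, hpq, orderedPairMap_orderedPairMap hinvol hq.1]

theorem image_orderedPairMap_inversionSet_ssubset (hij : i < j) (hf : f i < f j) :
    orderedPairMap (Equiv.swap i j) '' inversionSet f ⊂ inversionSet (f ∘ Equiv.swap i j) := by
  refine (Set.ssubset_iff_of_subset
    (mapsTo_orderedPairMap_inversionSet hij hf.le).image_subset).2 ⟨(i, j), ?_, ?_⟩
  · simpa [inversionSet, hij] using hf
  · rintro ⟨p, hp, hpij⟩
    have hfix : orderedPairMap (Equiv.swap i j) (i, j) = (i, j) := by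
      simp [orderedPairMap, hij.not_gt]
    have hpeq : p = (i, j) := by
      rw [← orderedPairMap_orderedPairMap (Equiv.swap_apply_self i j) hp.1, hpij, hfix]
    subst hpeq
    exact hf.not_gt hp.2

end Inversions

section Bruhat

variable {n : ℕ} {σ τ π : Equiv.Perm (Fin n)}

theorem invCount_eq_ncard_inversionSet (σ : Equiv.Perm (Fin n)) :
    invCount σ = (inversionSet σ).ncard := by
  simp [invCount, inversionSet, ← Set.ncard_coe_finset]

theorem invCount_lt_invCount_mul_swap {i j : Fin n} (hij : i < j) (hσ : σ i < σ j) :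
    invCount σ < invCount (σ * Equiv.swap i j) := by
  rw [invCount_eq_ncard_inversionSet, invCount_eq_ncard_inversionSet,
    ← injOn_orderedPairMap_inversionSet.ncard_image]
  exact Set.ncard_lt_ncard (image_orderedPairMap_inversionSet_ssubset hij hσ)

theorem bruhatStep_iff :
    BruhatStep σ τ ↔ ∃ i j, i < j ∧ σ i < σ j ∧ τ = σ * Equiv.swap i j := by
  constructor
  · rintro ⟨⟨i, j, hne, rfl⟩, hinv⟩
    wlog hij : i < j generalizing i j
    · rw [Equiv.swap_comm] at hinv ⊢
      exact this j i hne.symm hinv (hne.lt_or_gt.resolve_left hij)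
    refine ⟨i, j, hij, ?_, rfl⟩
    by_contra! hle
    have hlt : σ j < σ i := hle.lt_of_ne (σ.injective.ne hne.symm)
    have := invCount_lt_invCount_mul_swap (σ := σ * Equiv.swap i j) hij (by simpa using hlt)
    rw [mul_assoc, Equiv.swap_mul_self, mul_one] at this
    exact this.not_gt hinv
  · rintro ⟨i, j, hij, hσ, rfl⟩
    exact ⟨⟨i, j, hij.ne, rfl⟩, invCount_lt_invCount_mul_swap hij hσ⟩

theorem BruhatLE.ferrersBoard_subset (h : BruhatLE σ π) (i : Fin n) :
    ferrersBoard σ i ⊆ ferrersBoard π i := by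
  induction h with
  | refl => exact subset_rfl
  | tail _ hstep ih =>
    obtain ⟨a, b, hab, hlt, rfl⟩ := bruhatStep_iff.1 hstep
    exact ih.trans (ferrersBoard_subset_comp_swap hab.le hlt.le i)

theorem IsRookPlacement.bruhatLE_of_isSaturatedOn {B : Fin n → Set (Fin n)} (hB : Monotone B)
    (hσ : IsRookPlacement B σ) (hπ : IsRookPlacement B π) (hsat : IsSaturatedOn B π) :
    BruhatLE σ π := by
  obtain ⟨τ, ⟨hστ, hτ⟩, hmax⟩ :=
    (Set.toFinite {τ : Equiv.Perm (Fin n) | BruhatLE σ τ ∧ IsRookPlacement B τ}).exists_maximalFor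
      invCount _ ⟨σ, .refl, hσ⟩
  have hτsat : IsSaturatedOn B τ := by
    intro i j hij hlt hmem
    have hstep : BruhatStep τ (τ * Equiv.swap i j) := bruhatStep_iff.2 ⟨i, j, hij, hlt, rfl⟩
    have hle := hmax ⟨hστ.tail hstep, hτ.comp_swap hB hij.le hmem⟩ hstep.2.le
    exact hle.not_gt hstep.2
  have hτπ : τ = π :=
    DFunLike.coe_injective (hτsat.eq_of_bijective hsat hτ hπ τ.bijective π.bijective)
  exact hτπ ▸ hστ

theorem Avoids312.isSaturatedOn_ferrersBoard (hπ : Avoids312 π) :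
    IsSaturatedOn (ferrersBoard π) π := by
  rintro i j hij hlt ⟨m, hmi, hjm⟩
  have hmi' : m < i := hmi.lt_of_ne (by rintro rfl; exact hjm.not_gt hlt)
  have hjm' : π j < π m := hjm.lt_of_ne (π.injective.ne (hmi'.trans hij).ne')
  exact hπ ⟨m, i, j, hmi', hij, hlt, hjm'⟩

theorem mem_ferrersBoard_iff_le_runningMax {i v : Fin n} :
    v ∈ ferrersBoard π i ↔ (v : ℕ) + 1 ≤ runningMax π i := by
  simp [ferrersBoard, runningMax]

end Bruhat

/-- For a 312-avoiding permutation `π` with `λ_i = max {π_1, …, π_i}`, a permutation `σ`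
satisfies `σ ≤_B π` in the Bruhat order if and only if `σ_i ≤ λ_i` for all `i`; i.e. the
lower Bruhat interval `[id, π]_B` is exactly the set of complete rook placements on `λ`. -/
theorem bruhatLE_iff_complete_rook (n : ℕ) (π : Equiv.Perm (Fin n)) (hπ : Avoids312 π)
    (σ : Equiv.Perm (Fin n)) :
    BruhatLE σ π ↔ ∀ i : Fin n, (σ i : ℕ) + 1 ≤ runningMax π i := by
  simp_rw [← mem_ferrersBoard_iff_le_runningMax]
  constructor
  · intro h i
    exact h.ferrersBoard_subset i (isRookPlacement_ferrersBoard σ i)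
  · intro hσ
    exact IsRookPlacement.bruhatLE_of_isSaturatedOn (monotone_ferrersBoard π) hσ
      (isRookPlacement_ferrersBoard π) hπ.isSaturatedOn_ferrersBoard
end

section
/- Let λ = (λ_1 ≤ λ_2 ≤ … ≤ λ_n) be a weakly increasing sequence of positive integers with λ_i ≥ i for all i and λ_n = n. Define σ′ greedily by letting σ′_i be the largest element of {1, …, λ_i} not among {σ′_1, …, σ′_{i-1}}, for i = 1, …, n. Then σ′ is a well-defined permutation in S_n, σ′ avoids the pattern 312, and max{σ′_1, …, σ′_i} = λ_i for all i ∈ [n]. -/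
/-- The greedy word: `greedy L i` is the largest element of `{1, …, L i}` not among
`greedy L 0, …, greedy L (i - 1)` (and `0` if there is no such element, i.e. if the
greedy choice is not well-defined at step `i`). -/
noncomputable def greedy (L : ℕ → ℕ) : ℕ → ℕ := fun i =>
  Nat.strongRecOn i fun i ih =>
    (Finset.Icc 1 (L i) \
      (Finset.range i).attach.image fun j => ih j.1 (Finset.mem_range.mp j.2)).sup id

/-!
A value that is still available at step `k` was available at every earlier step `j` with `L j` large
enough, so `greedy L k ≤ L j` and `j ≤ k` force `greedy L k ≤ greedy L j`. In a pattern `312` at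
`i < j < k` one would have `greedy L k < greedy L i ≤ L i ≤ L j`, hence `greedy L k ≤ greedy L j`, a
contradiction. Moreover `L i` is either taken before step `i` or chosen at step `i`, while no value
up to step `i` exceeds `L i`; this gives the running maximum. A choice always exists, because
only `i < L i` values have been used before the (0-based) step `i`.
-/

/-- The values still available to the greedy word at step `i`: the elements of `{1, …, L i}` not
among `greedy L 0, …, greedy L (i - 1)`. -/
noncomputable def greedyChoices (L : ℕ → ℕ) (i : ℕ) : Finset ℕ :=
  Finset.Icc 1 (L i) \ (Finset.range i).image (greedy L)

section Word

variable {L : ℕ → ℕ} {i j k x : ℕ}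

theorem mem_greedyChoices :
    x ∈ greedyChoices L i ↔ (1 ≤ x ∧ x ≤ L i) ∧ ∀ j < i, greedy L j ≠ x := by
  simp [greedyChoices]

theorem greedyChoices_nonempty (h : i < L i) : (greedyChoices L i).Nonempty := by
  refine Finset.sdiff_nonempty_of_card_lt_card ?_
  calc ((Finset.range i).image (greedy L)).card
    _ ≤ (Finset.range i).card := Finset.card_image_le
    _ < (Finset.Icc 1 (L i)).card := by simpa using h

theorem greedy_eq_sup_greedyChoices (L : ℕ → ℕ) (i : ℕ) :
    greedy L i = (greedyChoices L i).sup id := by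
  have unfold_step : greedy L i = (Finset.Icc 1 (L i) \
      (Finset.range i).attach.image fun j => greedy L j.1).sup id := by
    rw [greedy, Nat.strongRecOn_eq]
    rfl
  rw [unfold_step, greedyChoices]
  congr 2
  ext x
  simp

theorem le_greedy_of_mem_greedyChoices (hx : x ∈ greedyChoices L i) : x ≤ greedy L i := by
  rw [greedy_eq_sup_greedyChoices]
  exact Finset.le_sup (f := id) hx

theorem greedy_le (L : ℕ → ℕ) (i : ℕ) : greedy L i ≤ L i := by
  rw [greedy_eq_sup_greedyChoices]
  exact Finset.sup_le fun _ hx => (mem_greedyChoices.mp hx).1.2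

theorem greedy_pos (h : i < L i) : 0 < greedy L i :=
  have ⟨_, hx⟩ := greedyChoices_nonempty h
  (mem_greedyChoices.mp hx).1.1.trans (le_greedy_of_mem_greedyChoices hx)

theorem greedy_mem_greedyChoices (h : 0 < greedy L i) : greedy L i ∈ greedyChoices L i := by
  have hne : (greedyChoices L i).Nonempty := by
    rw [Finset.nonempty_iff_ne_empty]
    intro hempty
    simp [greedy_eq_sup_greedyChoices, hempty] at h
  obtain ⟨x, hx, hsup⟩ := Finset.exists_mem_eq_sup _ hne id
  rwa [greedy_eq_sup_greedyChoices, hsup]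

theorem greedy_ne_of_lt (hi : 0 < greedy L i) (hji : j < i) : greedy L j ≠ greedy L i :=
  (mem_greedyChoices.mp (greedy_mem_greedyChoices hi)).2 j hji

theorem injOn_greedy (L : ℕ → ℕ) : Set.InjOn (greedy L) {i | 0 < greedy L i} := by
  intro i hi j hj hij
  rcases lt_trichotomy i j with hlt | heq | hgt
  · exact absurd hij (greedy_ne_of_lt hj hlt)
  · exact heq
  · exact absurd hij.symm (greedy_ne_of_lt hi hgt)

theorem greedy_le_greedy_of_le (hjk : j ≤ k) (h : greedy L k ≤ L j) :
    greedy L k ≤ greedy L j := by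
  rcases (greedy L k).eq_zero_or_pos with hzero | hpos
  · simp [hzero]
  · exact le_greedy_of_mem_greedyChoices <| mem_greedyChoices.mpr
      ⟨⟨hpos, h⟩, fun _ hlj => greedy_ne_of_lt hpos (hlj.trans_le hjk)⟩

theorem exists_le_greedy_eq (L : ℕ → ℕ) (i : ℕ) : ∃ j ≤ i, greedy L j = L i := by
  by_cases hused : ∃ j < i, greedy L j = L i
  · obtain ⟨j, hji, hj⟩ := hused
    exact ⟨j, hji.le, hj⟩
  · refine ⟨i, le_rfl, (greedy_le L i).antisymm ?_⟩
    rcases (L i).eq_zero_or_pos with hzero | hpos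
    · simp [hzero]
    · push Not at hused
      exact le_greedy_of_mem_greedyChoices (mem_greedyChoices.mpr ⟨⟨hpos, le_rfl⟩, hused⟩)

end Word

section Perm

variable {L : ℕ → ℕ} {n : ℕ}

theorem exists_perm_add_one_eq_greedy (hlt : ∀ i : Fin n, i < L i) (hle : ∀ i : Fin n, L i ≤ n) :
    ∃ σ : Equiv.Perm (Fin n), ∀ i : Fin n, (σ i : ℕ) + 1 = greedy L i := by
  have hpos (i : Fin n) : 0 < greedy L i := greedy_pos (hlt i)
  let f (i : Fin n) : Fin n := ⟨greedy L i - 1,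
    (Nat.sub_lt (hpos i) one_pos).trans_le ((greedy_le L i).trans (hle i))⟩
  have hf (i : Fin n) : (f i : ℕ) + 1 = greedy L i := Nat.sub_add_cancel (hpos i)
  have hinj : Function.Injective f := fun i j hij =>
    Fin.ext (injOn_greedy L (hpos i) (hpos j) (by rw [← hf, ← hf, hij]))
  exact ⟨Equiv.ofBijective f (Finite.injective_iff_bijective.mp hinj), hf⟩

variable {σ : Equiv.Perm (Fin n)}

theorem avoids312_of_add_one_eq_greedy (hmono : Monotone fun i : Fin n => L i)
    (hσ : ∀ i : Fin n, (σ i : ℕ) + 1 = greedy L i) : Avoids312 σ := by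
  rintro ⟨i, j, k, hij, hjk, hσjk, hσki⟩
  have lt_iff (a b : Fin n) : σ a < σ b ↔ greedy L a < greedy L b := by
    rw [← hσ, ← hσ, Nat.add_lt_add_iff_right, Fin.lt_def]
  rw [lt_iff] at hσjk hσki
  have hkj : greedy L k ≤ L j := hσki.le.trans ((greedy_le L i).trans (hmono hij.le))
  exact hσjk.not_ge (greedy_le_greedy_of_le hjk.le hkj)

theorem runningMax_of_add_one_eq_greedy (hmono : Monotone fun i : Fin n => L i)
    (hσ : ∀ i : Fin n, (σ i : ℕ) + 1 = greedy L i) (i : Fin n) : runningMax σ i = L i := by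
  simp only [runningMax, hσ]
  apply le_antisymm
  · exact Finset.sup_le fun j hj => (greedy_le L j).trans (hmono (Finset.mem_Iic.mp hj))
  · obtain ⟨j, hji, hj⟩ := exists_le_greedy_eq L i
    rw [← hj]
    exact Finset.le_sup (f := fun j : Fin n => greedy L j) (b := ⟨j, hji.trans_lt i.2⟩)
      (Finset.mem_Iic.mpr hji)

end Perm

/-- For a weakly increasing sequence `λ_1 ≤ … ≤ λ_n` of positive integers with
`λ_i ≥ i` for all `i` and `λ_n = n`, the greedy word (choosing at each step `i` the largest
unused element of `{1, …, λ_i}`) is a well-defined permutation `σ′ ∈ S_n`, it avoids the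
pattern `312`, and `max {σ′_1, …, σ′_i} = λ_i` for all `i`. -/
theorem greedy_is_312_avoiding_perm (n : ℕ) (hn : 0 < n) (L : Fin n → ℕ)
    (hmono : Monotone L) (hL : ∀ i : Fin n, (i : ℕ) + 1 ≤ L i)
    (hlast : L ⟨n - 1, Nat.sub_lt hn one_pos⟩ = n) :
    ∃ σ : Equiv.Perm (Fin n),
      (∀ i : Fin n, (σ i : ℕ) + 1 = greedy (fun j => if h : j < n then L ⟨j, h⟩ else 0) i) ∧
      Avoids312 σ ∧ ∀ i : Fin n, runningMax σ i = L i := by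
  set M : ℕ → ℕ := fun j => if h : j < n then L ⟨j, h⟩ else 0
  have hM : (fun i : Fin n => M i) = L := by
    funext i
    simp [M]
  have hlt (i : Fin n) : i < M i := (hL i).trans_eq (congrFun hM i).symm
  have hle (i : Fin n) : M i ≤ n := calc
    M i = L i := congrFun hM i
    _ ≤ L ⟨n - 1, Nat.sub_lt hn one_pos⟩ := hmono (Nat.le_sub_one_of_lt i.2)
    _ = n := hlast
  have hmonoM : Monotone fun i : Fin n => M i := hM ▸ hmono
  obtain ⟨σ, hσ⟩ := exists_perm_add_one_eq_greedy hlt hle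
  exact ⟨σ, hσ, avoids312_of_add_one_eq_greedy hmonoM hσ,
    fun i => (runningMax_of_add_one_eq_greedy hmonoM hσ i).trans (congrFun hM i)⟩
end

section
/- Let λ = (λ_1 ≤ … ≤ λ_n) be a weakly increasing sequence of positive integers with λ_i ≥ i for all i, let m be a positive integer with m ≤ λ_1 + 1, and set λ⁺ = (m, λ_1 + 1, …, λ_n + 1). Then for every i with 1 ≤ i ≤ m, Q^{λ⁺}_i(t) = Σ_{j=1}^{i-1} Q^{λ}_j(t) + t · Σ_{j=i}^{λ_1} Q^{λ}_j(t). -/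
open Polynomial

/-- Row-complete rook placements on the Ferrers board `L` (with `n` rows): in row `i` a rook
is placed in column `(p i : ℕ) + 1 ∈ {1, …, L i}`, and all columns are distinct. -/
def RookPlacements {n : ℕ} (L : Fin n → ℕ) : Finset (∀ i : Fin n, Fin (L i)) :=
  Finset.univ.filter fun p => ∀ i j : Fin n, i ≠ j → (p i : ℕ) ≠ (p j : ℕ)

/-- The number of ascents of a rook placement: indices `i` with `σ_i < σ_{i+1}`. -/
def ascCount {n : ℕ} (L : Fin n → ℕ) (p : ∀ i : Fin n, Fin (L i)) : ℕ :=
  (Finset.univ.filter fun i : Fin n =>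
    ∃ h : (i : ℕ) + 1 < n, (p i : ℕ) < (p ⟨(i : ℕ) + 1, h⟩ : ℕ)).card

/-- The refined rook-Eulerian polynomial `Q^λ_j(t)`: the ascent-generating polynomial of the
row-complete rook placements on `λ` whose rook in the first row is in column `j`. -/
noncomputable def rookEulerianAt {n : ℕ} (L : Fin (n + 1) → ℕ) (j : ℕ) : Polynomial ℝ :=
  ∑ p ∈ (RookPlacements L).filter (fun p => (p 0 : ℕ) + 1 = j), X ^ ascCount L p

/-!
Deleting the first rook of a placement on `λ⁺` together with its column `i` leaves a placement
on `λ`, and since every row of `λ` reaches column `i - 1`, this is a bijection onto all placements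
on `λ` once `i` is fixed. It keeps the relative order of the remaining rooks, so only the ascent at
the first position is lost; that ascent is present exactly when the rook in the first row of `λ`
stands in a column `j ≥ i`.
-/

lemma val_succAbove_lt_val_succAbove_iff {a b : ℕ} {x : Fin (a + 1)} {y : Fin (b + 1)}
    (hxy : (x : ℕ) = y) (u : Fin a) (v : Fin b) :
    (x.succAbove u : ℕ) < y.succAbove v ↔ (u : ℕ) < v := by
  simp only [Fin.succAbove, Fin.lt_def, Fin.val_castSucc, hxy, apply_ite Fin.val, Fin.val_succ]
  split_ifs <;> omega

section FirstRow

variable {n : ℕ} (L : Fin n → ℕ)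

/-- The board `λ⁺ = (m, λ_1 + 1, …, λ_n + 1)`: a new first row of length `m` above `λ`, whose
rows each gain one cell. -/
abbrev extendBoard (m : ℕ) : Fin (n + 1) → ℕ :=
  Fin.cases m fun k => L k + 1

/-- The placement on `λ⁺` obtained from a placement on `λ` by inserting an empty column at
position `c` and putting the rook of the new first row there. Columns are numbered from `0`. -/
def prependRook {m : ℕ} (c : Fin m) (hc : ∀ k, (c : ℕ) ≤ L k) (p : ∀ k, Fin (L k)) :
    ∀ k, Fin (extendBoard L m k) :=
  Fin.cons (α := fun k => Fin (extendBoard L m k)) c fun k =>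
    (⟨c, Nat.lt_succ_of_le (hc k)⟩ : Fin (L k + 1)).succAbove (p k)

variable {L}

lemma mem_rookPlacements_iff_injective {p : ∀ k, Fin (L k)} :
    p ∈ RookPlacements L ↔ Function.Injective fun k => (p k : ℕ) := by
  simp only [RookPlacements, Finset.mem_filter, Finset.mem_univ, true_and,
    Function.injective_iff_pairwise_ne]
  rfl

variable {m : ℕ} (c : Fin m) (hc : ∀ k, (c : ℕ) ≤ L k)

lemma lt_prependRook_succ_iff (p : ∀ k, Fin (L k)) (k : Fin n) :
    (c : ℕ) < prependRook L c hc p k.succ ↔ (c : ℕ) ≤ p k :=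
  Fin.lt_succAbove_iff_le_castSucc (⟨c, Nat.lt_succ_of_le (hc k)⟩ : Fin (L k + 1)) (p k)

lemma prependRook_succ_lt_prependRook_succ_iff (p : ∀ k, Fin (L k)) (k l : Fin n) :
    (prependRook L c hc p k.succ : ℕ) < prependRook L c hc p l.succ ↔ (p k : ℕ) < p l :=
  val_succAbove_lt_val_succAbove_iff (x := ⟨c, Nat.lt_succ_of_le (hc k)⟩)
    (y := ⟨c, Nat.lt_succ_of_le (hc l)⟩) rfl (p k) (p l)

lemma prependRook_succ_eq_prependRook_succ_iff (p : ∀ k, Fin (L k)) (k l : Fin n) :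
    (prependRook L c hc p k.succ : ℕ) = prependRook L c hc p l.succ ↔ (p k : ℕ) = p l := by
  simp only [le_antisymm_iff, ← not_lt, prependRook_succ_lt_prependRook_succ_iff]

lemma prependRook_injective : Function.Injective (prependRook L c hc) := fun _ _ h =>
  funext fun k => Fin.succAbove_right_injective (congrFun h k.succ)

lemma exists_prependRook_eq {q : ∀ k, Fin (extendBoard L m k)} (hq0 : q 0 = c)
    (hq : ∀ k : Fin n, (q k.succ : ℕ) ≠ c) : ∃ p, prependRook L c hc p = q := by
  have hpre (k : Fin n) : ∃ y : Fin (L k),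
      (⟨c, Nat.lt_succ_of_le (hc k)⟩ : Fin (L k + 1)).succAbove y = q k.succ :=
    Fin.exists_succAbove_eq (Fin.ne_of_val_ne (hq k))
  choose p hp using hpre
  exact ⟨p, funext <| Fin.cases hq0.symm hp⟩

lemma prependRook_mem_rookPlacements_iff {p : ∀ k, Fin (L k)} :
    prependRook L c hc p ∈ RookPlacements (extendBoard L m) ↔ p ∈ RookPlacements L := by
  have hcons : (fun k => (prependRook L c hc p k : ℕ)) =
      Fin.cons (c : ℕ) fun k : Fin n => (prependRook L c hc p k.succ : ℕ) :=
    funext <| Fin.cases rfl fun _ => rfl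
  have havoid : (c : ℕ) ∉ Set.range fun k : Fin n => (prependRook L c hc p k.succ : ℕ) := by
    rintro ⟨k, hk⟩
    exact Fin.succAbove_ne _ (p k) (Fin.ext hk)
  rw [mem_rookPlacements_iff_injective, mem_rookPlacements_iff_injective, hcons,
    Fin.cons_injective_iff, and_iff_right havoid]
  simp only [Function.Injective, prependRook_succ_eq_prependRook_succ_iff]

lemma image_prependRook_rookPlacements :
    (RookPlacements L).image (prependRook L c hc) =
      (RookPlacements (extendBoard L m)).filter fun q => (q 0 : ℕ) = c := by
  ext q
  rw [Finset.mem_image, Finset.mem_filter]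
  constructor
  · rintro ⟨p, hp, rfl⟩
    exact ⟨(prependRook_mem_rookPlacements_iff c hc).2 hp, rfl⟩
  · rintro ⟨hq, hq0⟩
    have hne (k : Fin n) : (q k.succ : ℕ) ≠ c := by
      rw [← hq0]
      exact (mem_rookPlacements_iff_injective.1 hq).ne (Fin.succ_ne_zero k)
    obtain ⟨p, rfl⟩ := exists_prependRook_eq c hc (Fin.ext hq0) hne
    exact ⟨p, (prependRook_mem_rookPlacements_iff c hc).1 hq, rfl⟩

end FirstRow

lemma ascCount_congr {n : ℕ} {L M : Fin n → ℕ} {p : ∀ k, Fin (L k)} {q : ∀ k, Fin (M k)}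
    (h : ∀ k l, (p k : ℕ) < p l ↔ (q k : ℕ) < q l) : ascCount L p = ascCount M q := by
  simp only [ascCount, h]

lemma ascCount_eq_add_ascCount_tail {n : ℕ} (L : Fin (n + 2) → ℕ) (p : ∀ k, Fin (L k)) :
    ascCount L p =
      (if (p 0 : ℕ) < p 1 then 1 else 0) + ascCount (Fin.tail L) (Fin.tail p) := by
  unfold ascCount
  rw [Finset.card_filter, Finset.card_filter, Fin.sum_univ_succ]
  congr 1
  · exact if_congr (exists_prop_of_true (Nat.one_lt_succ_succ n)) rfl rfl
  · exact Finset.sum_congr rfl fun k _ => if_congr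
      ⟨fun ⟨h, hlt⟩ => ⟨Nat.lt_of_succ_lt_succ h, hlt⟩, fun ⟨h, hlt⟩ => ⟨Nat.succ_lt_succ h, hlt⟩⟩
      rfl rfl

section Recursion

variable {n : ℕ} {L : Fin (n + 1) → ℕ}

lemma ascCount_prependRook {m : ℕ} (c : Fin m) (hc : ∀ k, (c : ℕ) ≤ L k)
    (p : ∀ k, Fin (L k)) :
    ascCount (extendBoard L m) (prependRook L c hc p) =
      (if (c : ℕ) ≤ p 0 then 1 else 0) + ascCount L p := by
  rw [ascCount_eq_add_ascCount_tail]
  congr 1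
  · exact if_congr (lt_prependRook_succ_iff c hc p 0) rfl rfl
  · exact ascCount_congr (prependRook_succ_lt_prependRook_succ_iff c hc p)

lemma rookEulerianAt_extendBoard {m : ℕ} (c : Fin m) (hc : ∀ k, (c : ℕ) ≤ L k) :
    rookEulerianAt (extendBoard L m) (c + 1) =
      ∑ p ∈ RookPlacements L, X ^ ((if (c : ℕ) ≤ p 0 then 1 else 0) + ascCount L p) := by
  have hfilter : ((RookPlacements (extendBoard L m)).filter fun q => (q 0 : ℕ) + 1 = c + 1) =
      (RookPlacements L).image (prependRook L c hc) := by
    simp only [image_prependRook_rookPlacements, Nat.add_right_cancel_iff]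
  rw [rookEulerianAt, hfilter, Finset.sum_image (prependRook_injective c hc).injOn]
  simp only [ascCount_prependRook]

lemma sum_rookEulerianAt (S : Finset ℕ) :
    ∑ j ∈ S, rookEulerianAt L j =
      ∑ p ∈ (RookPlacements L).filter (fun p => (p 0 : ℕ) + 1 ∈ S), X ^ ascCount L p := by
  simp only [rookEulerianAt, Finset.sum_filter]
  rw [Finset.sum_comm]
  simp only [Finset.sum_ite_eq]

theorem rookEulerianAt_recursion_general {m i : ℕ} (hi : 1 ≤ i) (him : i ≤ m)
    (hiL : ∀ k, i ≤ L k + 1) :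
    rookEulerianAt (extendBoard L m) i =
      (∑ j ∈ Finset.Icc 1 (i - 1), rookEulerianAt L j)
        + X * ∑ j ∈ Finset.Icc i (L 0), rookEulerianAt L j := by
  obtain ⟨c, rfl⟩ := Nat.exists_eq_add_of_le' hi
  have hlow (p : ∀ k, Fin (L k)) : (p 0 : ℕ) + 1 ∈ Finset.Icc 1 (c + 1 - 1) ↔ ¬ c ≤ p 0 := by
    rw [Finset.mem_Icc]; omega
  have hhigh (p : ∀ k, Fin (L k)) : (p 0 : ℕ) + 1 ∈ Finset.Icc (c + 1) (L 0) ↔ c ≤ p 0 := by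
    rw [Finset.mem_Icc]; omega
  rw [rookEulerianAt_extendBoard (⟨c, him⟩ : Fin m) fun k => Nat.le_of_succ_le_succ (hiL k),
    ← Finset.sum_filter_not_add_sum_filter _ fun p => c ≤ p 0, sum_rookEulerianAt,
    sum_rookEulerianAt, Finset.mul_sum]
  simp only [hlow, hhigh]
  congr 1 <;> refine Finset.sum_congr rfl fun p hp => ?_
  · rw [if_neg (Finset.mem_filter.1 hp).2, zero_add]
  · rw [if_pos (Finset.mem_filter.1 hp).2, pow_add, pow_one]

end Recursion

/-- If `λ = (λ_1 ≤ … ≤ λ_n)` is a Ferrers board with `λ_i ≥ i`, `m` is a positive integer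
with `m ≤ λ_1 + 1` and `λ⁺ = (m, λ_1 + 1, …, λ_n + 1)`, then for every `1 ≤ i ≤ m`,
`Q^{λ⁺}_i(t) = Σ_{j=1}^{i-1} Q^λ_j(t) + t · Σ_{j=i}^{λ_1} Q^λ_j(t)`. -/
theorem rookEulerianAt_recursion (n : ℕ) (L : Fin (n + 1) → ℕ) (hmono : Monotone L)
    (hL : ∀ i : Fin (n + 1), (i : ℕ) + 1 ≤ L i)
    (m : ℕ) (hm : 0 < m) (hm' : m ≤ L 0 + 1)
    (i : ℕ) (hi : 1 ≤ i) (him : i ≤ m) :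
    rookEulerianAt (Fin.cases m (fun j => L j + 1) : Fin (n + 2) → ℕ) i =
      (∑ j ∈ Finset.Icc 1 (i - 1), rookEulerianAt L j)
        + X * ∑ j ∈ Finset.Icc i (L 0), rookEulerianAt L j :=
  rookEulerianAt_recursion_general hi him fun k =>
    (him.trans hm').trans (Nat.succ_le_succ (hmono (Fin.zero_le k)))
end

section
/- Let λ = (λ_1 ≤ … ≤ λ_n) be a weakly increasing sequence of positive integers with λ_i ≥ i for all i, where n > 1. Then the sequence of polynomials (Q^{λ}_{λ_1}(t), Q^{λ}_{λ_1 - 1}(t), …, Q^{λ}_2(t), Q^{λ}_1(t)) is an interlacing sequence; that is, Q^{λ}_i(t) interlaces Q^{λ}_j(t) whenever λ_1 ≥ i > j ≥ 1. -/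
/-!
The relation `f ⪯ g` is detected in the upper half-plane: for `Im z > 0`, the value `g z` lies in
the sector swept out counterclockwise from `f z` to `z * f z`. Deleting the first rook of a
placement expresses each `Q_a` as `∑_{k < a} Q'_k + t ∑_{k ≥ a} Q'_k` in terms of the polynomials
`Q'_k` of a smaller board. If the values `Q'_k z` pairwise lie in such sectors, then so do these
combinations, because sectors are convex cones.

Conversely, the sector condition says that a continuous branch of `arg g - arg f` on the closed
upper half-plane, which vanishes at real points to the right of all roots, stays in `[0, π]`. At a
real point `x` this branch equals `π` times the difference of the numbers of roots of `g` and of `f`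
exceeding `x`, so this difference is always `0` or `1`.
-/

open Polynomial

/-- The list of real roots of `f`, with multiplicity, in weakly decreasing order. -/
noncomputable def descRoots (f : Polynomial ℝ) : List ℝ :=
  (f.roots.sort (· ≤ ·)).reverse

/-- `f` interlaces `g` (written `f ⪯ g`): both have positive leading coefficients, all their
roots are real and non-positive, `deg g = deg f` or `deg f + 1`, and listing the roots of `f` as
`a_1 ≥ a_2 ≥ …` and those of `g` as `b_1 ≥ b_2 ≥ …` one has
`⋯ ≤ a_2 ≤ b_2 ≤ a_1 ≤ b_1 ≤ 0`. -/
def Interlaces (f g : Polynomial ℝ) : Prop :=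
  0 < f.leadingCoeff ∧ 0 < g.leadingCoeff ∧
  (f.roots.card = f.natDegree) ∧ (g.roots.card = g.natDegree) ∧
  (∀ x ∈ f.roots, x ≤ 0) ∧ (∀ x ∈ g.roots, x ≤ 0) ∧
  (g.natDegree = f.natDegree ∨ g.natDegree = f.natDegree + 1) ∧
  (∀ i : ℕ, i < f.natDegree → (descRoots f).getD i 0 ≤ (descRoots g).getD i 0) ∧
  (∀ i : ℕ, i + 1 < g.natDegree → (descRoots g).getD (i + 1) 0 ≤ (descRoots f).getD i 0)

open Complex (arg normSq)
open Filter

attribute [local instance] Complex.finrank_real_complex_fact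

local notation "ω" => Orientation.areaForm Complex.orientation

/-! ### Sectors in the complex plane -/

section Sector

variable {z u v : ℂ}

theorem areaForm_self_mul (z u : ℂ) : ω u (z * u) = z.im * normSq u := by
  simp only [Complex.areaForm, Complex.normSq_apply, Complex.mul_im, Complex.mul_re,
    Complex.conj_re, Complex.conj_im]
  ring

theorem areaForm_mul_mul (z u v : ℂ) : ω (z * u) (z * v) = normSq z * ω u v := by
  simp only [Complex.areaForm, Complex.normSq_apply, Complex.mul_im, Complex.mul_re,
    Complex.conj_re, Complex.conj_im]
  ring

/-- For `z` in the upper half-plane, `InSector z u v` says that `v` lies in the closed sector swept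
out counterclockwise from `u` to `z * u`. Two vectors are compared through the sign of their signed
area, so that the condition is linear in `u` and in `v`; it holds trivially if either is `0`. -/
def InSector (z u v : ℂ) : Prop :=
  0 ≤ ω u v ∧ 0 ≤ ω v (z * u)

theorem InSector.self_mul (h : InSector z u v) : InSector z v (z * u) :=
  ⟨h.2, (areaForm_mul_mul z u v).symm ▸ mul_nonneg (Complex.normSq_nonneg z) h.1⟩

theorem InSector.sum {ι κ : Type*} {s : Finset ι} {t : Finset κ} {f : ι → ℂ} {g : κ → ℂ}
    (h : ∀ i ∈ s, ∀ j ∈ t, InSector z (f i) (g j)) :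
    InSector z (∑ i ∈ s, f i) (∑ j ∈ t, g j) := by
  constructor
  · rw [LinearMap.map_sum₂]
    simp only [map_sum]
    exact Finset.sum_nonneg fun i hi => Finset.sum_nonneg fun j hj => (h i hi j hj).1
  · rw [LinearMap.map_sum₂]
    simp only [Finset.mul_sum, map_sum]
    exact Finset.sum_nonneg fun j hj => Finset.sum_nonneg fun i hi => (h i hi j hj).2

theorem InSector.im_mul_normSq_le_areaForm (h : InSector z u v) :
    z.im * normSq u ≤ ω (v + u) (v + z * u) := by
  have expand : ω (v + u) (v + z * u) = ω v (z * u) + ω u v + z.im * normSq u := by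
    simp only [map_add, LinearMap.add_apply, Orientation.areaForm_apply_self, areaForm_self_mul]
    ring
  linarith [h.1, h.2]

theorem InSector.add_add_mul (hz : 0 ≤ z.im) (h : InSector z u v) :
    InSector z (v + u) (v + z * u) := by
  have hu := mul_nonneg hz (Complex.normSq_nonneg u)
  have hv := mul_nonneg hz (Complex.normSq_nonneg v)
  refine ⟨hu.trans h.im_mul_normSq_le_areaForm, ?_⟩
  have expand : ω (v + z * u) (z * (v + u)) =
      z.im * normSq v + ω v (z * u) + ω (z * u) (z * v) := by
    simp only [mul_add, map_add, LinearMap.add_apply, Orientation.areaForm_apply_self,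
      areaForm_self_mul]
    ring
  rw [expand]
  exact add_nonneg (add_nonneg hv h.2) h.self_mul.2

end Sector

section TwistedSum

variable {R S : Type*} [CommSemiring R] [CommSemiring S]

/-- The combination `∑_{k < a} f k + x * ∑_{a ≤ k < m} f k`: the shape of the recursion for
rook-Eulerian polynomials, where `x` marks the ascents between the first two rooks. -/
def twistedSum (x : R) (m : ℕ) (f : ℕ → R) (a : ℕ) : R :=
  ∑ k ∈ Finset.range m, (if k < a then 1 else x) * f k

theorem map_twistedSum {F : Type*} [FunLike F R S] [RingHomClass F R S] (φ : F) (x : R) (m : ℕ)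
    (f : ℕ → R) (a : ℕ) :
    φ (twistedSum x m f a) = twistedSum (φ x) m (fun k => φ (f k)) a := by
  simp only [twistedSum, map_sum, map_mul, apply_ite φ, map_one]

variable (x : R) {m : ℕ} (f : ℕ → R) {a b : ℕ}

theorem twistedSum_eq_add_sum_Ico (hba : b ≤ a) (ham : a ≤ m) :
    twistedSum x m f a = ∑ k ∈ Finset.range m \ Finset.Ico b a, (if k < b then 1 else x) * f k +
      ∑ k ∈ Finset.Ico b a, f k := by
  have hsub : Finset.Ico b a ⊆ Finset.range m := fun k hk =>
    Finset.mem_range.2 ((Finset.mem_Ico.1 hk).2.trans_le ham)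
  rw [twistedSum, ← Finset.sum_sdiff hsub]
  refine congrArg₂ _ (Finset.sum_congr rfl fun k hk => ?_) (Finset.sum_congr rfl fun k hk => ?_)
  · have hk' : ¬(b ≤ k ∧ k < a) := fun h => (Finset.mem_sdiff.1 hk).2 (Finset.mem_Ico.2 h)
    rw [if_congr (show k < a ↔ k < b by omega) rfl rfl]
  · rw [if_pos (Finset.mem_Ico.1 hk).2, one_mul]

theorem twistedSum_eq_add_mul_sum_Ico (ham : a ≤ m) :
    twistedSum x m f b = ∑ k ∈ Finset.range m \ Finset.Ico b a, (if k < b then 1 else x) * f k +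
      x * ∑ k ∈ Finset.Ico b a, f k := by
  have hsub : Finset.Ico b a ⊆ Finset.range m := fun k hk =>
    Finset.mem_range.2 ((Finset.mem_Ico.1 hk).2.trans_le ham)
  rw [twistedSum, ← Finset.sum_sdiff hsub, Finset.mul_sum]
  congr 1
  exact Finset.sum_congr rfl fun k hk => by rw [if_neg (Finset.mem_Ico.1 hk).1.not_gt]

end TwistedSum

/-- A sequence `f 0, …, f (m - 1)` of nonzero complex numbers each of which lies in the sectors (in
the sense of `InSector`) of all later ones: the pointwise form of an interlacing sequence
`(f (m - 1), …, f 0)` of polynomials evaluated at `z`. -/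
structure IsSectorChain (z : ℂ) (m : ℕ) (f : ℕ → ℂ) : Prop where
  ne_zero : ∀ a < m, f a ≠ 0
  inSector : ∀ ⦃b a : ℕ⦄, b < a → a < m → InSector z (f a) (f b)

namespace IsSectorChain

variable {z : ℂ} {m : ℕ} {f : ℕ → ℂ} {a b : ℕ}

theorem mono {m' : ℕ} (h : IsSectorChain z m f) (hm : m' ≤ m) : IsSectorChain z m' f :=
  ⟨fun a ha => h.ne_zero a (ha.trans_le hm), fun _ _ hba ha => h.inSector hba (ha.trans_le hm)⟩

theorem congr {g : ℕ → ℂ} (h : IsSectorChain z m f) (hfg : ∀ a < m, f a = g a) :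
    IsSectorChain z m g where
  ne_zero a ha := hfg a ha ▸ h.ne_zero a ha
  inSector b a hba ha := hfg a ha ▸ hfg b (hba.trans ha) ▸ h.inSector hba ha

theorem inSector_sum_Ico (h : IsSectorChain z m f) (ham : a ≤ m) :
    InSector z (∑ k ∈ Finset.Ico b a, f k)
      (∑ k ∈ Finset.range m \ Finset.Ico b a, (if k < b then 1 else z) * f k) := by
  refine InSector.sum fun l hl k hk => ?_
  simp only [Finset.mem_sdiff, Finset.mem_range, Finset.mem_Ico] at hl hk
  split_ifs with hkb
  · rw [one_mul]
    exact h.inSector (by omega) (by omega)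
  · exact (h.inSector (by omega) hk.1).self_mul

theorem areaForm_twistedSum_pos (hz : 0 < z.im) (h : IsSectorChain z m f) (ha : a < m) :
    0 < ω (twistedSum z m f (a + 1)) (twistedSum z m f a) := by
  rw [twistedSum_eq_add_sum_Ico z f a.le_succ ha, twistedSum_eq_add_mul_sum_Ico z f ha]
  refine lt_of_lt_of_le ?_ (h.inSector_sum_Ico ha).im_mul_normSq_le_areaForm
  rw [Nat.Ico_succ_singleton, Finset.sum_singleton]
  exact mul_pos hz (Complex.normSq_pos.2 (h.ne_zero a ha))

theorem twistedSum (hz : 0 < z.im) (hm : 0 < m) (h : IsSectorChain z m f) :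
    IsSectorChain z (m + 1) (twistedSum z m f) where
  ne_zero a ha h0 := by
    obtain ham | rfl := (Nat.lt_succ_iff.1 ha).lt_or_eq
    · simpa [h0] using h.areaForm_twistedSum_pos hz ham
    · obtain ⟨b, rfl⟩ := Nat.exists_eq_add_one.2 hm
      simpa [h0] using h.areaForm_twistedSum_pos hz b.lt_succ_self
  inSector b a hba ha := by
    have ham : a ≤ m := Nat.lt_succ_iff.1 ha
    rw [twistedSum_eq_add_sum_Ico z f hba.le ham, twistedSum_eq_add_mul_sum_Ico z f ham]
    exact (h.inSector_sum_Ico ham).add_add_mul hz.le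

end IsSectorChain

/-! ### Arguments and root counts -/

section Argument

theorem subset_Icc_zero_pi_of_sin_nonneg {S : Set ℝ} (hS : S.OrdConnected)
    (hsin : ∀ x ∈ S, 0 ≤ Real.sin x) (h0 : 0 ∈ S) : S ⊆ Set.Icc 0 Real.pi := by
  have hpi := Real.pi_pos
  refine fun x hx => ⟨le_of_not_gt fun hneg => ?_, le_of_not_gt fun hgt => ?_⟩
  · have hmem : max x (-(Real.pi / 2)) ∈ S :=
      hS.out hx h0 ⟨le_max_left _ _, max_le hneg.le (by linarith)⟩
    have hlt : max x (-(Real.pi / 2)) < 0 := max_lt hneg (by linarith)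
    have hgt : -Real.pi < max x (-(Real.pi / 2)) := lt_max_of_lt_right (by linarith)
    exact (Real.sin_neg_of_neg_of_neg_pi_lt hlt hgt).not_ge (hsin _ hmem)
  · have hmem : min x (3 * Real.pi / 2) ∈ S :=
      hS.out h0 hx ⟨le_min (by linarith) (by linarith), min_le_left _ _⟩
    have hpos : 0 < Real.sin (min x (3 * Real.pi / 2) - Real.pi) :=
      Real.sin_pos_of_pos_of_lt_pi (sub_pos.2 (lt_min hgt (by linarith)))
        (by linarith [min_le_right x (3 * Real.pi / 2)])
    rw [Real.sin_sub_pi] at hpos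
    linarith [hsin _ hmem]

theorem continuousWithinAt_arg_setOf_im_nonneg {z : ℂ} (hz0 : z ≠ 0) :
    ContinuousWithinAt arg {w | 0 ≤ w.im} z := by
  by_cases hslit : z ∈ Complex.slitPlane
  · exact (Complex.continuousAt_arg hslit).continuousWithinAt
  · obtain ⟨hre, him⟩ : z.re ≤ 0 ∧ z.im = 0 := by
      simpa [Complex.mem_slitPlane_iff, not_or] using hslit
    have hre0 : z.re ≠ 0 := fun h => hz0 (Complex.ext h him)
    exact Complex.continuousWithinAt_arg_of_re_neg_of_im_zero (hre.lt_of_ne hre0) him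

/-- The sum of the arguments of the factors of `∏ a ∈ s, (z - a)`. On the closed upper half-plane
without the points of `s` it is a continuous branch of the argument of this product. -/
noncomputable def argSum (s : Multiset ℝ) (z : ℂ) : ℝ :=
  (s.map fun a : ℝ => arg (z - (a : ℂ))).sum

theorem argSum_ofReal (s : Multiset ℝ) (x : ℝ) :
    argSum s x = s.countP (x < ·) * Real.pi := by
  have harg (a : ℝ) : arg ((x : ℂ) - a) = if x < a then Real.pi else 0 := by
    rw [← Complex.ofReal_sub]
    split_ifs with h
    · exact Complex.arg_ofReal_of_neg (sub_neg.2 h)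
    · exact Complex.arg_ofReal_of_nonneg (sub_nonneg.2 (not_lt.1 h))
  simp only [argSum, harg]
  induction s using Multiset.induction_on with
  | empty => simp
  | cons a s ih =>
    rw [Multiset.map_cons, Multiset.sum_cons, ih, Multiset.countP_cons]
    split_ifs <;> push_cast <;> ring

theorem continuousWithinAt_argSum {s : Multiset ℝ} {z : ℂ} (hs : ∀ a ∈ s, z ≠ (a : ℂ)) :
    ContinuousWithinAt (argSum s) {w | 0 ≤ w.im} z := by
  refine tendsto_multiset_sum s fun a ha => ?_
  have harg : ContinuousWithinAt arg {w | 0 ≤ w.im} (z - (a : ℂ)) :=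
    continuousWithinAt_arg_setOf_im_nonneg (sub_ne_zero.2 (hs a ha))
  exact harg.comp (f := fun w : ℂ => w - (a : ℂ)) (by fun_prop) fun w hw => by simpa using hw

theorem multiset_prod_sub_eq_norm_mul_exp (s : Multiset ℝ) (z : ℂ) :
    (s.map fun a : ℝ => z - (a : ℂ)).prod =
      ‖(s.map fun a : ℝ => z - (a : ℂ)).prod‖ * Complex.exp (argSum s z * Complex.I) := by
  induction s using Multiset.induction_on with
  | empty => simp [argSum]
  | cons a s ih =>
    rw [argSum, Multiset.map_cons, Multiset.prod_cons, Multiset.map_cons, Multiset.sum_cons,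
      ← argSum, norm_mul, Complex.ofReal_mul, Complex.ofReal_add, add_mul, Complex.exp_add,
      mul_mul_mul_comm, Complex.norm_mul_exp_arg_mul_I, ← ih]

theorem sin_argSum_sub_argSum_nonneg_of_im_nonneg {s t : Multiset ℝ}
    (h : ∀ z : ℂ, 0 < z.im → 0 ≤ Real.sin (argSum t z - argSum s z)) {z : ℂ} (hz : 0 ≤ z.im) :
    0 ≤ Real.sin (argSum t z - argSum s z) := by
  obtain him | him := hz.lt_or_eq
  · exact h z him
  · have hzre : z = z.re := Complex.ext rfl him.symm
    rw [hzre, argSum_ofReal, argSum_ofReal, Real.sin_sub, Real.sin_nat_mul_pi,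
      Real.sin_nat_mul_pi]
    simp

theorem argSum_sub_argSum_mem_Icc {s t : Multiset ℝ}
    (h : ∀ z : ℂ, 0 < z.im → 0 ≤ Real.sin (argSum t z - argSum s z)) {z : ℂ} (hz : 0 ≤ z.im)
    (hzst : ∀ a ∈ s + t, z ≠ (a : ℂ)) : argSum t z - argSum s z ∈ Set.Icc 0 Real.pi := by
  set H : Set ℂ := {w | 0 ≤ w.im ∧ ∀ a ∈ s + t, w ≠ (a : ℂ)}
  have hconn : IsPreconnected H := by
    refine (convex_halfSpace_im_gt 0).isPreconnected.subset_closure (fun w hw => ?_) fun w hw => ?_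
    · refine ⟨le_of_lt hw, fun a _ hwa => ?_⟩
      simp [hwa] at hw
    · rw [Complex.closure_setOfPred_lt_im]
      exact hw.1
  have hcont : ContinuousOn (fun w => argSum t w - argSum s w) H := fun w hw =>
    ((continuousWithinAt_argSum fun a ha => hw.2 a (Multiset.mem_add.2 (.inr ha))).sub
      (continuousWithinAt_argSum fun a ha => hw.2 a (Multiset.mem_add.2 (.inl ha)))).mono
      fun _ => And.left
  have hzero : 0 ∈ (fun w => argSum t w - argSum s w) '' H := by
    obtain ⟨x, hx⟩ : ∃ x : ℝ, ∀ a ∈ s + t, a < x :=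
      ((eventually_all_finset (s + t).toFinset).2 fun a _ => eventually_gt_atTop a).exists.imp
        fun x hx a ha => hx a (Multiset.mem_toFinset.2 ha)
    refine ⟨x, ⟨by simp, fun a ha => Complex.ofReal_injective.ne (hx a ha).ne'⟩, ?_⟩
    have hcount (r : Multiset ℝ) (hr : r ≤ s + t) : r.countP (x < ·) = 0 :=
      Multiset.countP_eq_zero.2 fun a ha => (hx a (Multiset.mem_of_le hr ha)).not_gt
    simp [argSum_ofReal, hcount s (Multiset.le_add_right s t), hcount t (Multiset.le_add_left t s)]
  refine subset_Icc_zero_pi_of_sin_nonneg (hconn.image _ hcont).ordConnected ?_ hzero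
    ⟨z, ⟨hz, hzst⟩, rfl⟩
  rintro _ ⟨w, hw, rfl⟩
  exact sin_argSum_sub_argSum_nonneg_of_im_nonneg h hw.1

theorem countP_le_and_countP_le_add_one_of_sin_nonneg {s t : Multiset ℝ}
    (h : ∀ z : ℂ, 0 < z.im → 0 ≤ Real.sin (argSum t z - argSum s z)) {x : ℝ} (hx : x ∉ s + t) :
    s.countP (x < ·) ≤ t.countP (x < ·) ∧ t.countP (x < ·) ≤ s.countP (x < ·) + 1 := by
  have hmem := argSum_sub_argSum_mem_Icc h (z := x) (by simp) fun a ha hxa =>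
    hx (Complex.ofReal_injective hxa ▸ ha)
  rw [argSum_ofReal, argSum_ofReal, ← sub_mul] at hmem
  constructor
  · have := nonneg_of_mul_nonneg_left hmem.1 Real.pi_pos
    exact_mod_cast sub_nonneg.1 this
  · have := le_of_mul_le_mul_right (hmem.2.trans_eq (one_mul _).symm) Real.pi_pos
    exact_mod_cast sub_le_iff_le_add'.1 this

end Argument

section Counting

theorem lt_countP_iff_lt_getD {α : Type*} [LinearOrder α] {l : List α} (hl : l.Pairwise (· ≥ ·))
    (i : ℕ) (x d : α) : i < l.countP (x < ·) ↔ i < l.length ∧ x < l.getD i d := by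
  induction l generalizing i with
  | nil => simp
  | cons a l ih =>
    rw [List.pairwise_cons] at hl
    obtain hxa | hax := lt_or_ge x a
    · cases i with
      | zero => simp [hxa]
      | succ i => simp [hxa, ih hl.2]
    · have hnot : ∀ b ∈ a :: l, ¬x < b := by
        simpa [hax] using fun b hb => (hl.1 b hb).trans hax
      have hzero : (a :: l).countP (x < ·) = 0 := by simpa [List.countP_eq_zero] using hnot
      rw [hzero]
      refine iff_of_false (Nat.not_lt_zero i) fun ⟨hi, hlt⟩ => ?_
      rw [List.getD_eq_getElem _ _ hi] at hlt
      exact hnot _ (List.getElem_mem hi) hlt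

theorem getD_add_le_getD_of_countP_le {α : Type*} [LinearOrder α] [DenselyOrdered α]
    {l m : List α} (hl : l.Pairwise (· ≥ ·)) (hm : m.Pairwise (· ≥ ·)) {k : ℕ}
    (h : ∀ᶠ x in cofinite, l.countP (x < ·) ≤ m.countP (x < ·) + k) {i : ℕ}
    (hi : i + k < l.length) (d : α) : l.getD (i + k) d ≤ m.getD i d := by
  by_contra! hlt
  obtain ⟨x, hcount, hmx, hxl⟩ := (h.and_frequently
    (frequently_cofinite_mem_iff_infinite.2 (Set.Ioo_infinite hlt))).exists
  have hil : i + k < l.countP (x < ·) := (lt_countP_iff_lt_getD hl _ x d).2 ⟨hi, hxl⟩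
  exact hmx.not_gt ((lt_countP_iff_lt_getD hm i x d).1 (by omega)).2

theorem card_le_card_add_of_countP_le {α : Type*} [LinearOrder α] [Nonempty α] [NoMinOrder α]
    {s t : Multiset α} {k : ℕ}
    (h : ∀ᶠ x in cofinite, s.countP (x < ·) ≤ t.countP (x < ·) + k) :
    s.card ≤ t.card + k := by
  have hbelow : ∀ᶠ x in atBot, ∀ a ∈ s.toFinset, x < a :=
    (eventually_all_finset _).2 fun a _ => eventually_lt_atBot a
  obtain ⟨x, hcount, hx⟩ := ((h.filter_mono atBot_le_cofinite).and hbelow).exists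
  calc s.card = s.countP (x < ·) :=
        (Multiset.countP_eq_card.2 fun a ha => hx a (Multiset.mem_toFinset.2 ha)).symm
    _ ≤ t.countP (x < ·) + k := hcount
    _ ≤ t.card + k := Nat.add_le_add_right (Multiset.countP_le_card _ t) k

end Counting

/-! ### Interlacing from sectors -/

section Interlacing

theorem splits_of_aeval_ne_zero_of_im_pos {f : ℝ[X]} (h : ∀ z : ℂ, 0 < z.im → aeval z f ≠ 0) :
    f.Splits := by
  refine Splits.of_splits_map (algebraMap ℝ ℂ) (IsAlgClosed.splits _) fun z hz => ?_
  have hroot : aeval z f = 0 := by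
    rw [← eval_map_algebraMap]
    exact (mem_roots'.1 hz).2
  have him : z.im = 0 := by
    obtain hneg | hzero | hpos := lt_trichotomy z.im 0
    · refine absurd ?_ (h (starRingEnd ℂ z) (by simpa using hneg))
      rw [aeval_conj, hroot, map_zero]
    · exact hzero
    · exact absurd hroot (h z hpos)
  exact ⟨z.re, Complex.ext rfl him.symm⟩

theorem aeval_eq_norm_mul_exp_argSum_roots {f : ℝ[X]} (hf : f.Splits) (hlc : 0 ≤ f.leadingCoeff)
    (z : ℂ) : aeval z f = ‖aeval z f‖ * Complex.exp (argSum f.roots z * Complex.I) := by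
  have hprod : aeval z f = f.leadingCoeff * (f.roots.map fun a : ℝ => z - (a : ℂ)).prod := by
    conv_lhs => rw [hf.eq_prod_roots]
    simp [map_multiset_prod, Multiset.map_map]
  rw [hprod, norm_mul, Complex.norm_of_nonneg hlc, Complex.ofReal_mul, mul_assoc,
    ← multiset_prod_sub_eq_norm_mul_exp]

theorem areaForm_mul_exp_mul_exp (r r' θ θ' : ℝ) :
    ω (r * Complex.exp (θ * Complex.I)) (r' * Complex.exp (θ' * Complex.I)) =
      r * r' * Real.sin (θ' - θ) := by
  simp only [Complex.areaForm, Complex.mul_im, Complex.conj_re, Complex.conj_im,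
    Complex.mul_re, Complex.ofReal_re, Complex.ofReal_im, Complex.exp_ofReal_mul_I_re,
    Complex.exp_ofReal_mul_I_im, Real.sin_sub]
  ring

theorem sin_argSum_roots_sub_nonneg {f g : ℝ[X]} (hf : f.Splits) (hg : g.Splits)
    (hflc : 0 ≤ f.leadingCoeff) (hglc : 0 ≤ g.leadingCoeff) {z : ℂ} (hfz : aeval z f ≠ 0)
    (hgz : aeval z g ≠ 0) (h : 0 ≤ ω (aeval z f) (aeval z g)) :
    0 ≤ Real.sin (argSum g.roots z - argSum f.roots z) := by
  rw [aeval_eq_norm_mul_exp_argSum_roots hf hflc, aeval_eq_norm_mul_exp_argSum_roots hg hglc,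
    areaForm_mul_exp_mul_exp] at h
  exact nonneg_of_mul_nonneg_right h (mul_pos (norm_pos_iff.2 hfz) (norm_pos_iff.2 hgz))

theorem nonpos_of_mem_roots_of_coeff_nonneg {R : Type*} [CommRing R] [LinearOrder R]
    [IsStrictOrderedRing R] {f : R[X]} (hf : ∀ k, 0 ≤ f.coeff k) {x : R} (hx : x ∈ f.roots) :
    x ≤ 0 := by
  by_contra! hpos
  obtain ⟨hf0, hroot⟩ := mem_roots'.1 hx
  have heval : 0 < f.eval x := by
    rw [eval_eq_sum_range]
    refine Finset.sum_pos' (fun k _ => mul_nonneg (hf k) (pow_nonneg hpos.le k))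
      ⟨f.natDegree, Finset.self_mem_range_succ _, mul_pos ?_ (pow_pos hpos _)⟩
    exact (hf _).lt_of_ne (leadingCoeff_ne_zero.2 hf0).symm
  exact heval.ne' hroot

theorem pairwise_descRoots (f : ℝ[X]) : (descRoots f).Pairwise (· ≥ ·) :=
  List.pairwise_reverse.2 (Multiset.pairwise_sort _ _)

theorem coe_descRoots (f : ℝ[X]) : (descRoots f : Multiset ℝ) = f.roots := by
  rw [descRoots, Multiset.coe_reverse, Multiset.sort_eq]

theorem interlaces_of_countP_roots {f g : ℝ[X]} (hf : f.Splits) (hg : g.Splits)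
    (hf0 : f ≠ 0) (hg0 : g ≠ 0) (hfc : ∀ k, 0 ≤ f.coeff k) (hgc : ∀ k, 0 ≤ g.coeff k)
    (hfg : ∀ᶠ x in cofinite, f.roots.countP (x < ·) ≤ g.roots.countP (x < ·))
    (hgf : ∀ᶠ x in cofinite, g.roots.countP (x < ·) ≤ f.roots.countP (x < ·) + 1) :
    Interlaces f g := by
  have lcf : 0 < f.leadingCoeff := (hfc _).lt_of_ne (leadingCoeff_ne_zero.2 hf0).symm
  have lcg : 0 < g.leadingCoeff := (hgc _).lt_of_ne (leadingCoeff_ne_zero.2 hg0).symm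
  have cardf := hf.natDegree_eq_card_roots
  have cardg := hg.natDegree_eq_card_roots
  have degfg : f.natDegree ≤ g.natDegree := by
    rw [cardf, cardg]
    exact card_le_card_add_of_countP_le (k := 0) hfg
  have deggf : g.natDegree ≤ f.natDegree + 1 := by
    rw [cardf, cardg]
    exact card_le_card_add_of_countP_le hgf
  have lenf : (descRoots f).length = f.natDegree := by
    rw [cardf, ← coe_descRoots, Multiset.coe_card]
  have leng : (descRoots g).length = g.natDegree := by
    rw [cardg, ← coe_descRoots, Multiset.coe_card]
  simp only [← coe_descRoots, Multiset.coe_countP] at hfg hgf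
  refine ⟨lcf, lcg, cardf.symm, cardg.symm,
    fun x hx => nonpos_of_mem_roots_of_coeff_nonneg hfc hx,
    fun x hx => nonpos_of_mem_roots_of_coeff_nonneg hgc hx, by omega,
    fun i hi => ?_, fun i hi => ?_⟩
  · exact getD_add_le_getD_of_countP_le (k := 0) (pairwise_descRoots f) (pairwise_descRoots g) hfg
      (hi.trans_eq lenf.symm) 0
  · exact getD_add_le_getD_of_countP_le (pairwise_descRoots g) (pairwise_descRoots f) hgf
      (hi.trans_eq leng.symm) 0

theorem interlaces_of_areaForm_nonneg {f g : ℝ[X]} (hfc : ∀ k, 0 ≤ f.coeff k)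
    (hgc : ∀ k, 0 ≤ g.coeff k) (hf : ∀ z : ℂ, 0 < z.im → aeval z f ≠ 0)
    (hg : ∀ z : ℂ, 0 < z.im → aeval z g ≠ 0)
    (h : ∀ z : ℂ, 0 < z.im → 0 ≤ ω (aeval z f) (aeval z g)) : Interlaces f g := by
  have hfs := splits_of_aeval_ne_zero_of_im_pos hf
  have hgs := splits_of_aeval_ne_zero_of_im_pos hg
  have hf0 : f ≠ 0 := fun h0 => hf Complex.I (by simp) (by simp [h0])
  have hg0 : g ≠ 0 := fun h0 => hg Complex.I (by simp) (by simp [h0])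
  have hcount (x : ℝ) (hx : x ∉ f.roots + g.roots) :=
    countP_le_and_countP_le_add_one_of_sin_nonneg (fun z hz =>
      sin_argSum_roots_sub_nonneg hfs hgs (hfc _) (hgc _) (hf z hz) (hg z hz) (h z hz)) hx
  have hcofinite : ∀ᶠ x in cofinite, x ∉ f.roots + g.roots := by
    simpa using (f.roots + g.roots).toFinset.eventually_cofinite_notMem
  exact interlaces_of_countP_roots hfs hgs hf0 hg0 hfc hgc
    (hcofinite.mono fun x hx => (hcount x hx).1) (hcofinite.mono fun x hx => (hcount x hx).2)

end Interlacing

/-! ### The recursion for rook-Eulerian polynomials -/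

section Recursion

/-- The increasing enumeration `v ↦ v` (`v < a`), `v ↦ v + 1` (`a ≤ v`) of the columns other than
`a`. -/
def skip (a v : ℕ) : ℕ :=
  if v < a then v else v + 1

theorem strictMono_skip (a : ℕ) : StrictMono (skip a) := by
  intro v w hvw
  unfold skip
  split_ifs <;> omega

theorem skip_ne (a v : ℕ) : skip a v ≠ a := by
  unfold skip
  split_ifs <;> omega

theorem lt_skip_iff {a v : ℕ} : a < skip a v ↔ a ≤ v := by
  unfold skip
  split_ifs <;> omega

theorem skip_lt_of_lt_sub_one {a v N : ℕ} (hv : v < N - 1) : skip a v < N := by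
  unfold skip
  split_ifs <;> omega

theorem exists_lt_sub_one_skip_eq {a v N : ℕ} (ha : a < N) (hv : v < N) (hva : v ≠ a) :
    ∃ w < N - 1, skip a w = v := by
  obtain hlt | hgt := hva.lt_or_gt
  · exact ⟨v, by omega, if_pos hlt⟩
  · exact ⟨v - 1, by omega, by rw [skip, if_neg (by omega)]; omega⟩

/-- The board left after deleting the first row and the column of its rook. Which column is deleted
does not matter: on a weakly increasing board it meets every row. -/
def tailBoard {n : ℕ} (L : Fin (n + 1) → ℕ) : Fin n → ℕ :=
  fun i => L i.succ - 1

variable {n : ℕ}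

theorem monotone_tailBoard {L : Fin (n + 1) → ℕ} (hmono : Monotone L) : Monotone (tailBoard L) :=
  fun _ _ h => Nat.sub_le_sub_right (hmono (Fin.succ_le_succ_iff.2 h)) 1

theorem succ_le_tailBoard {L : Fin (n + 1) → ℕ} (hL : ∀ i : Fin (n + 1), (i : ℕ) + 1 ≤ L i)
    (i : Fin n) : (i : ℕ) + 1 ≤ tailBoard L i :=
  Nat.le_sub_one_of_lt (hL i.succ)

/-- The placement on `L` whose first rook is in column `a` and whose other rooks form the placement
`q` on the remaining columns. -/
def insertRook {L : Fin (n + 1) → ℕ} {a : ℕ} (ha : a < L 0) (q : ∀ i, Fin (tailBoard L i)) :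
    ∀ i, Fin (L i) :=
  Fin.cons ⟨a, ha⟩ fun i => ⟨skip a (q i), skip_lt_of_lt_sub_one (q i).2⟩

theorem mem_rookPlacements {L : Fin n → ℕ} {p : ∀ i, Fin (L i)} :
    p ∈ RookPlacements L ↔ Function.Injective fun i => (p i : ℕ) := by
  simp only [RookPlacements, Finset.mem_filter_univ, Function.Injective, ne_eq, not_imp_not]

theorem insertRook_mem_rookPlacements {L : Fin (n + 1) → ℕ} {a : ℕ} (ha : a < L 0)
    {q : ∀ i, Fin (tailBoard L i)} :
    insertRook ha q ∈ RookPlacements L ↔ q ∈ RookPlacements (tailBoard L) := by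
  have hval : (fun i => (insertRook ha q i : ℕ)) = Fin.cons a (skip a ∘ fun i => (q i : ℕ)) := by
    funext i
    cases i using Fin.cases <;> rfl
  have hrange : a ∉ Set.range (skip a ∘ fun i => (q i : ℕ)) := fun ⟨i, hi⟩ => skip_ne a (q i) hi
  rw [mem_rookPlacements, mem_rookPlacements, hval, Fin.cons_injective_iff,
    (strictMono_skip a).injective.of_comp_iff]
  exact and_iff_right hrange

theorem insertRook_injective {L : Fin (n + 1) → ℕ} {a : ℕ} (ha : a < L 0) :
    Function.Injective (insertRook ha) := fun q q' h => by
  funext i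
  have hi : skip a (q i) = skip a (q' i) := congrArg (fun p => (p i.succ : ℕ)) h
  exact Fin.ext ((strictMono_skip a).injective hi)

theorem exists_insertRook_eq {L : Fin (n + 1) → ℕ} (hmono : Monotone L) {a : ℕ} (ha : a < L 0)
    {p : ∀ i, Fin (L i)} (hp : p ∈ RookPlacements L) (hp0 : (p 0 : ℕ) = a) :
    ∃ q, insertRook ha q = p := by
  have hne (i : Fin n) : (p i.succ : ℕ) ≠ a :=
    hp0 ▸ (mem_rookPlacements.1 hp).ne (Fin.succ_ne_zero i)
  choose q hq hskip using fun i : Fin n =>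
    exists_lt_sub_one_skip_eq (ha.trans_le (hmono (Fin.zero_le i.succ))) (p i.succ).2 (hne i)
  refine ⟨fun i => ⟨q i, hq i⟩, funext fun i => Fin.ext ?_⟩
  cases i using Fin.cases with
  | zero => exact hp0.symm
  | succ i => exact hskip i

theorem ascCount_insertRook {L : Fin (n + 2) → ℕ} {a : ℕ} (ha : a < L 0)
    (q : ∀ i, Fin (tailBoard L i)) :
    ascCount L (insertRook ha q) =
      (if (q 0 : ℕ) < a then 0 else 1) + ascCount (tailBoard L) q := by
  have hfirst : (∃ h : ((0 : Fin (n + 2)) : ℕ) + 1 < n + 2, (insertRook ha q 0 : ℕ) <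
      (insertRook ha q ⟨((0 : Fin (n + 2)) : ℕ) + 1, h⟩ : ℕ)) ↔ ¬(q 0 : ℕ) < a :=
    (exists_prop_of_true (by simp)).trans (lt_skip_iff.trans not_lt.symm)
  have hrest (i : Fin (n + 1)) : (∃ h : (i.succ : ℕ) + 1 < n + 2, (insertRook ha q i.succ : ℕ) <
      (insertRook ha q ⟨(i.succ : ℕ) + 1, h⟩ : ℕ)) ↔
      ∃ h : (i : ℕ) + 1 < n + 1, (q i : ℕ) < (q ⟨(i : ℕ) + 1, h⟩ : ℕ) :=
    ⟨fun ⟨h, hlt⟩ => ⟨Nat.succ_lt_succ_iff.1 h, (strictMono_skip a).lt_iff_lt.1 hlt⟩,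
      fun ⟨h, hlt⟩ => ⟨Nat.succ_lt_succ h, strictMono_skip a hlt⟩⟩
  rw [ascCount, Fin.card_filter_univ_succ', if_congr hfirst rfl rfl, ite_not]
  simp only [hrest, ascCount]

theorem rookEulerianAt_eq_sum_tailBoard {L : Fin (n + 2) → ℕ} (hmono : Monotone L) {a : ℕ}
    (ha : a < L 0) :
    rookEulerianAt L (a + 1) = ∑ q ∈ RookPlacements (tailBoard L),
      (if (q 0 : ℕ) < a then 1 else X) * X ^ ascCount (tailBoard L) q := by
  refine (Finset.sum_bij (fun q _ => insertRook ha q) (fun q hq => ?_)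
    (fun q _ q' _ h => insertRook_injective ha h) (fun p hp => ?_) (fun q _ => ?_)).symm
  · exact Finset.mem_filter.2 ⟨(insertRook_mem_rookPlacements ha).2 hq, rfl⟩
  · obtain ⟨hp, hp0⟩ := Finset.mem_filter.1 hp
    obtain ⟨q, rfl⟩ := exists_insertRook_eq hmono ha hp (Nat.succ_injective hp0)
    exact ⟨q, (insertRook_mem_rookPlacements ha).1 hp, rfl⟩
  · rw [ascCount_insertRook, pow_add, apply_ite (X ^ ·), pow_zero, pow_one]

theorem sum_rookPlacements_eq_sum_range (L : Fin (n + 1) → ℕ) (c : ℕ → ℝ[X]) :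
    ∑ q ∈ RookPlacements L, c (q 0) * X ^ ascCount L q =
      ∑ k ∈ Finset.range (L 0), c k * rookEulerianAt L (k + 1) := by
  rw [← Finset.sum_fiberwise_of_maps_to (g := fun q => (q 0 : ℕ))
    fun q _ => Finset.mem_range.2 (q 0).2]
  refine Finset.sum_congr rfl fun k _ => ?_
  simp only [rookEulerianAt, Nat.add_right_cancel_iff, Finset.mul_sum]
  exact Finset.sum_congr rfl fun q hq => by rw [(Finset.mem_filter.1 hq).2]

theorem rookEulerianAt_eq_twistedSum {L : Fin (n + 2) → ℕ} (hmono : Monotone L) {a : ℕ}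
    (ha : a < L 0) :
    rookEulerianAt L (a + 1) =
      twistedSum X (tailBoard L 0) (fun k => rookEulerianAt (tailBoard L) (k + 1)) a :=
  (rookEulerianAt_eq_sum_tailBoard hmono ha).trans
    (sum_rookPlacements_eq_sum_range (tailBoard L) fun k => if k < a then 1 else X)

theorem rookEulerianAt_eq_one {L : Fin 1 → ℕ} {a : ℕ} (ha : a < L 0) :
    rookEulerianAt L (a + 1) = 1 := by
  have hasc (p : ∀ i, Fin (L i)) : ascCount L p = 0 :=
    Finset.card_eq_zero.2 (Finset.filter_eq_empty_iff.2 fun i _ ⟨h, _⟩ => by omega)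
  have hfilter : (RookPlacements L).filter (fun p => (p 0 : ℕ) + 1 = a + 1) =
      {Fin.cons ⟨a, ha⟩ finZeroElim} := by
    ext p
    simp only [Finset.mem_filter, mem_rookPlacements, Function.injective_of_subsingleton,
      true_and, Nat.add_right_cancel_iff, Finset.mem_singleton, funext_iff, Fin.forall_fin_one,
      Fin.ext_iff, Fin.cons_zero]
  rw [rookEulerianAt, hfilter, Finset.sum_singleton, hasc, pow_zero]

theorem coeff_rookEulerianAt_nonneg (L : Fin (n + 1) → ℕ) (j k : ℕ) :
    0 ≤ (rookEulerianAt L j).coeff k := by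
  rw [rookEulerianAt, finsetSum_coeff]
  refine Finset.sum_nonneg fun p _ => ?_
  rw [coeff_X_pow]
  split_ifs <;> norm_num

end Recursion

theorem isSectorChain_aeval_rookEulerianAt {z : ℂ} (hz : 0 < z.im) {n : ℕ} {L : Fin (n + 1) → ℕ}
    (hmono : Monotone L) (hL : ∀ i : Fin (n + 1), (i : ℕ) + 1 ≤ L i) :
    IsSectorChain z (L 0) fun a => aeval z (rookEulerianAt L (a + 1)) := by
  induction n with
  | zero =>
    have hone : IsSectorChain z (L 0) fun _ => 1 :=
      ⟨fun _ _ => one_ne_zero, fun _ _ _ _ => by simp [InSector, Complex.areaForm, hz.le]⟩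
    exact hone.congr fun a ha => by rw [rookEulerianAt_eq_one ha, map_one]
  | succ n ih =>
    have hpos : 0 < tailBoard L 0 := succ_le_tailBoard hL 0
    have hle : L 0 ≤ tailBoard L 0 + 1 :=
      (hmono (Fin.zero_le (Fin.succ 0))).trans le_tsub_add
    refine (((ih (monotone_tailBoard hmono) (succ_le_tailBoard hL)).twistedSum hz hpos).mono
      hle).congr fun a ha => ?_
    rw [rookEulerianAt_eq_twistedSum hmono ha, map_twistedSum, aeval_X]

/-- For a Ferrers board `λ = (λ_1 ≤ … ≤ λ_n)` of positive integers with `λ_i ≥ i` and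
`n > 1` rows, the sequence `(Q^λ_{λ_1}, Q^λ_{λ_1 - 1}, …, Q^λ_2, Q^λ_1)` is interlacing:
`Q^λ_i ⪯ Q^λ_j` whenever `λ_1 ≥ i > j ≥ 1`. -/
theorem rookEulerianAt_interlacing (n : ℕ) (hn : 0 < n) (L : Fin (n + 1) → ℕ)
    (hmono : Monotone L) (hL : ∀ i : Fin (n + 1), (i : ℕ) + 1 ≤ L i)
    (i j : ℕ) (hj : 1 ≤ j) (hji : j < i) (hi : i ≤ L 0) :
    Interlaces (rookEulerianAt L i) (rookEulerianAt L j) := by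
  obtain ⟨a, rfl⟩ := Nat.exists_eq_add_one.2 (hj.trans hji.le)
  obtain ⟨b, rfl⟩ := Nat.exists_eq_add_one.2 hj
  have hba : b < a := Nat.succ_lt_succ_iff.1 hji
  have chain (z : ℂ) (hz : 0 < z.im) := isSectorChain_aeval_rookEulerianAt hz hmono hL
  exact interlaces_of_areaForm_nonneg
    (coeff_rookEulerianAt_nonneg L _) (coeff_rookEulerianAt_nonneg L _)
    (fun z hz => (chain z hz).ne_zero a hi) (fun z hz => (chain z hz).ne_zero b (hba.trans hi))
    (fun z hz => ((chain z hz).inSector hba hi).1)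
end
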